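/- Let L be a mock-Lie algebra over a field K of characteristic different from 2 and 3, and let ι: L → U(L) be the canonical map into its universal enveloping algebra. Then the kernel of ι is contained in L^4, the fourth term of the lower central series of L. -/

import Mathlib

/-!
It suffices to find a linear map `ρ` from `L` to an associative algebra with
`ρ (x ∘ y) = (ρ x ρ y + ρ y ρ x) / 2` and `ker ρ ≤ L⁴`: it factors through `U(L)`.

Pass to `M = L / L⁴`, a mock-Lie algebra in which `((x ∘ y) ∘ z) ∘ w = 0`; by the Jacobi identity
`(x ∘ y) ∘ (z ∘ w) = 0` as well. Then `M` acts faithfully on `V = K ⊕ M ⊕ B`, where `B` is the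
space of linear maps `b : M → M` which vanish on `M ∘ M` and take values in the annihilator of `M`.
The action is `x • (k, m, b) = (0, k x + x ∘ m + b x, β x m)`, where `β y z : M → M`
is the map `w ↦ (w ∘ y) ∘ z - (w ∘ z) ∘ y`. It is faithful since `x • (1, 0, 0) = (0, x, 0)`.
The defining relation of `U(M)` holds on `V` because `β` is alternating and kills `M ∘ M`, and
because `β y m x + β x m y = 3 (x ∘ y) ∘ m`, a consequence of the Jacobi identity, makes up for
`x ∘ (y ∘ m) + y ∘ (x ∘ m)` being `-(x ∘ y) ∘ m` where `2 (x ∘ y) ∘ m` is needed.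
-/

variable (K : Type*) [Field K] {L : Type*} [AddCommGroup L] [Module K L]

/-- For subspaces `V`, `W` of `L`, `V ∘ W` is the linear span of all products
`v ∘ w` with `v ∈ V`, `w ∈ W`. -/
def prodSpan (mul : L →ₗ[K] L →ₗ[K] L) (V W : Submodule K L) : Submodule K L :=
  Submodule.span K {z : L | ∃ v ∈ V, ∃ w ∈ W, z = mul v w}

/-- The lower central series: `lc 1 = L`, `lc (m+1) = (lc m) ∘ L`.
(The value at `0` is junk, set to `⊤`.) -/
def lc (mul : L →ₗ[K] L →ₗ[K] L) : ℕ → Submodule K L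
  | 0 => ⊤
  | 1 => ⊤
  | (m + 2) => prodSpan K mul (lc mul (m + 1)) ⊤

/-- The defining relations of the universal enveloping algebra of a mock-Lie algebra. -/
inductive URel (mul : L →ₗ[K] L →ₗ[K] L) :
    TensorAlgebra K L → TensorAlgebra K L → Prop
  | mk (x y : L) : URel mul
      ((1 / 2 : K) • (TensorAlgebra.ι K x * TensorAlgebra.ι K y +
        TensorAlgebra.ι K y * TensorAlgebra.ι K x))
      (TensorAlgebra.ι K (mul x y))

/-- The universal enveloping algebra `U(L)`: the quotient of the tensor algebra `T(L)`
by the two-sided ideal generated by the elements `(1/2)(x ⊗ y + y ⊗ x) - x ∘ y`. -/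
abbrev UEnv (mul : L →ₗ[K] L →ₗ[K] L) : Type _ := RingQuot (URel K mul)

/-- The canonical map `ι : L → U(L)`. -/
noncomputable def uIota (mul : L →ₗ[K] L →ₗ[K] L) : L →ₗ[K] UEnv K mul :=
  (RingQuot.mkAlgHom K (URel K mul)).toLinearMap ∘ₗ TensorAlgebra.ι K

namespace MockLie

section Nilpotent

variable {K : Type*} [Field K] {M : Type*} [AddCommGroup M] [Module K M]

/-- The linear maps `b : M → M` which vanish on `M ∘ M` and take values in the annihilator
of `M`. -/
def centralMaps (mul : M →ₗ[K] M →ₗ[K] M) : Submodule K (M →ₗ[K] M) where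
  carrier := {b | (∀ x y, b (mul x y) = 0) ∧ ∀ x y, mul (b x) y = 0}
  add_mem' := by
    rintro a b ⟨ha, ha'⟩ ⟨hb, hb'⟩
    exact ⟨fun x y => by simp [ha, hb], fun x y => by simp [ha', hb']⟩
  zero_mem' := by simp
  smul_mem' := by
    rintro c b ⟨hb, hb'⟩
    exact ⟨fun x y => by simp [hb], fun x y => by simp [hb']⟩

/-- The alternating bilinear map `β`, with `β y z w = (w ∘ y) ∘ z - (w ∘ z) ∘ y`. -/
def beta (mul : M →ₗ[K] M →ₗ[K] M)
    (nil : ∀ x y z w : M, mul (mul (mul x y) z) w = 0) :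
    M →ₗ[K] M →ₗ[K] centralMaps mul :=
  LinearMap.mk₂ K
    (fun y z => ⟨mul.flip z ∘ₗ mul.flip y - mul.flip y ∘ₗ mul.flip z,
      fun u v => by simp [nil], fun u v => by simp [nil]⟩)
    (fun a b c => by ext w; simp; abel)
    (fun k a b => by ext w; simp [smul_sub])
    (fun a b c => by ext w; simp; abel)
    (fun k a b => by ext w; simp [smul_sub])

@[simp]
theorem beta_apply (mul : M →ₗ[K] M →ₗ[K] M)
    (nil : ∀ x y z w : M, mul (mul (mul x y) z) w = 0) (y z w : M) :
    (beta mul nil y z).1 w = mul (mul w y) z - mul (mul w z) y := rfl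

/-- The action of `M` on `K ⊕ M ⊕ B`, where `B = centralMaps mul`. -/
def action (mul : M →ₗ[K] M →ₗ[K] M)
    (nil : ∀ x y z w : M, mul (mul (mul x y) z) w = 0) :
    M →ₗ[K] Module.End K (K × M × centralMaps mul) :=
  LinearMap.mk₂ K
    (fun x v => (0, v.1 • x + mul x v.2.1 + v.2.2.1 x, beta mul nil x v.2.1))
    (fun a b c => by ext <;> simp; abel)
    (fun k a b => by ext <;> simp [smul_comm k])
    (fun a b c => by ext <;> simp [add_smul]; abel)
    (fun k a b => by ext <;> simp [mul_smul])

@[simp]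
theorem action_apply (mul : M →ₗ[K] M →ₗ[K] M)
    (nil : ∀ x y z w : M, mul (mul (mul x y) z) w = 0) (x : M) (v : K × M × centralMaps mul) :
    action mul nil x v = (0, v.1 • x + mul x v.2.1 + v.2.2.1 x, beta mul nil x v.2.1) := rfl

theorem action_injective (mul : M →ₗ[K] M →ₗ[K] M)
    (nil : ∀ x y z w : M, mul (mul (mul x y) z) w = 0) {x : M} (hx : action mul nil x = 0) :
    x = 0 := by
  have h := congrArg (fun v => v.2.1) (LinearMap.congr_fun hx (1, 0, 0))
  simpa using h

/-- The defining relation of the universal enveloping algebra holds for `action`. -/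
theorem action_relation (mul : M →ₗ[K] M →ₗ[K] M)
    (comm : ∀ x y : M, mul x y = mul y x)
    (jacobi : ∀ x y z : M, mul (mul x y) z + mul (mul z x) y + mul (mul y z) x = 0)
    (nil : ∀ x y z w : M, mul (mul (mul x y) z) w = 0) (x y : M) :
    action mul nil x * action mul nil y + action mul nil y * action mul nil x =
      (2 : K) • action mul nil (mul x y) := by
  have nil' : ∀ x y z w : M, mul (mul x y) (mul z w) = 0 := by
    intro x y z w
    have h := jacobi x y (mul z w)
    rwa [comm y (mul z w), nil, nil, add_zero, add_zero] at h
  refine LinearMap.ext fun ⟨k, m, b, hb, hb'⟩ => ?_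
  refine Prod.ext ?_ (Prod.ext ?_ (Subtype.ext (LinearMap.ext fun w => ?_)))
  · simp
  · have h := jacobi x y m
    have e1 : mul x (mul y m) = mul (mul y m) x := comm _ _
    have e2 : mul y (mul x m) = mul (mul m x) y := by rw [comm y, comm x m]
    have e3 : mul (mul x m) y = mul (mul m x) y := by rw [comm x m]
    have e4 : mul x (b y) = 0 := by rw [comm, hb']
    have e5 : mul y (b x) = 0 := by rw [comm, hb']
    simp only [Module.End.mul_apply, LinearMap.add_apply, LinearMap.smul_apply, action_apply,
      Prod.snd_add, Prod.fst_add, Prod.smul_snd, Prod.smul_fst, map_add, map_smul, beta_apply,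
      zero_smul, zero_add, hb, e1, e2, e3, e4, e5, comm y x, add_zero]
    have h' : mul (mul x y) m = - mul (mul m x) y - mul (mul y m) x := by
      rw [← sub_eq_zero, ← h]; abel
    rw [h']
    module
  · have e1 : mul (mul w x) (b y) = 0 := by rw [comm, hb']
    have e2 : mul (mul w y) (b x) = 0 := by rw [comm, hb']
    have e3 : mul w (b y) = 0 := by rw [comm, hb']
    have e4 : mul w (b x) = 0 := by rw [comm, hb']
    have e5 : ∀ u v t, mul (mul w (mul u v)) t = 0 := fun u v t => by rw [comm w, nil]
    simp [nil', e1, e2, e3, e4, e5]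
    module

end Nilpotent

section Quotient

variable {K : Type*} [Field K] {L : Type*} [AddCommGroup L] [Module K L]

theorem mul_mem_lc (mul : L →ₗ[K] L →ₗ[K] L) {m : ℕ} {x : L} (hx : x ∈ lc K mul (m + 1)) (y : L) :
    mul x y ∈ lc K mul (m + 2) :=
  Submodule.subset_span ⟨x, hx, y, trivial, rfl⟩

theorem lc_antitone_succ (mul : L →ₗ[K] L →ₗ[K] L) (m : ℕ) :
    lc K mul (m + 2) ≤ lc K mul (m + 1) := by
  induction m with
  | zero => exact le_top
  | succ m ih =>
    refine Submodule.span_mono ?_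
    rintro _ ⟨v, hv, w, hw, rfl⟩
    exact ⟨v, ih hv, w, hw, rfl⟩

/-- The multiplication induced on the quotient by an ideal. -/
def quotMul (mul : L →ₗ[K] L →ₗ[K] L) (p : Submodule K L)
    (hr : ∀ x, ∀ y ∈ p, mul x y ∈ p) (hl : ∀ x ∈ p, ∀ y, mul x y ∈ p) :
    (L ⧸ p) →ₗ[K] (L ⧸ p) →ₗ[K] (L ⧸ p) :=
  p.liftQ
    { toFun := fun x => p.mapQ p (mul x) (hr x)
      map_add' := fun x y => by ext z; simp
      map_smul' := fun k x => by ext z; simp }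
    (fun x hx => by
      rw [LinearMap.mem_ker]
      ext z
      simpa using hl x hx z)

@[simp]
theorem quotMul_mk (mul : L →ₗ[K] L →ₗ[K] L) (p : Submodule K L)
    (hr : ∀ x, ∀ y ∈ p, mul x y ∈ p) (hl : ∀ x ∈ p, ∀ y, mul x y ∈ p) (x y : L) :
    quotMul mul p hr hl (p.mkQ x) (p.mkQ y) = p.mkQ (mul x y) := rfl

/-- Half of the universal property of `U(L)`: a linear map to an associative algebra which respects
the defining relations factors through `ι`, hence vanishes on its kernel. -/
theorem ker_uIota_le_ker (h2 : (2 : K) ≠ 0) (mul : L →ₗ[K] L →ₗ[K] L)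
    {A : Type*} [Semiring A] [Algebra K A] (ρ : L →ₗ[K] A)
    (h : ∀ x y, ρ x * ρ y + ρ y * ρ x = (2 : K) • ρ (mul x y)) :
    LinearMap.ker (uIota K mul) ≤ LinearMap.ker ρ := by
  have hrel : ∀ ⦃a b⦄, URel K mul a b → TensorAlgebra.lift K ρ a = TensorAlgebra.lift K ρ b := by
    rintro _ _ ⟨x, y⟩
    simp only [map_smul, map_add, map_mul, TensorAlgebra.lift_ι_apply]
    rw [h, smul_smul, one_div, inv_mul_cancel₀ h2, one_smul]
  intro x hx
  have h' : RingQuot.liftAlgHom K ⟨TensorAlgebra.lift K ρ, hrel⟩ (uIota K mul x) = ρ x := by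
    simp [uIota]
  rw [LinearMap.mem_ker.1 hx, map_zero] at h'
  exact h'.symm

/-- A homomorphism to a mock-Lie algebra `M` with `M⁴ = 0` vanishes on the kernel of `ι`,
because `action` is injective. -/
theorem ker_uIota_le_ker_hom (h2 : (2 : K) ≠ 0) (mul : L →ₗ[K] L →ₗ[K] L)
    {M : Type*} [AddCommGroup M] [Module K M] (q : M →ₗ[K] M →ₗ[K] M)
    (comm : ∀ x y : M, q x y = q y x)
    (jacobi : ∀ x y z : M, q (q x y) z + q (q z x) y + q (q y z) x = 0)
    (nil : ∀ x y z w : M, q (q (q x y) z) w = 0)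
    (π : L →ₗ[K] M) (hπ : ∀ x y, q (π x) (π y) = π (mul x y)) :
    LinearMap.ker (uIota K mul) ≤ LinearMap.ker π := by
  intro x hx
  suffices hrel : ∀ x y, action q nil (π x) * action q nil (π y) +
      action q nil (π y) * action q nil (π x) = (2 : K) • action q nil (π (mul x y)) from
    action_injective q nil (ker_uIota_le_ker h2 mul
      (A := Module.End K (K × M × centralMaps q)) (action q nil ∘ₗ π) hrel hx)
  intro x y
  have h := action_relation q comm jacobi nil (π x) (π y)
  rw [hπ] at h
  exact h

end Quotient

end MockLie

open MockLie in
/-- for a mock-Lie algebra `L` over a field of characteristic `≠ 2, 3`,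
the kernel of the canonical map `ι : L → U(L)` is contained in `L⁴`. -/
theorem ker_uIota_le_lcs_four (h2 : (2 : K) ≠ 0) (h3 : (3 : K) ≠ 0)
    (mul : L →ₗ[K] L →ₗ[K] L)
    (comm : ∀ x y : L, mul x y = mul y x)
    (jacobi : ∀ x y z : L, mul (mul x y) z + mul (mul z x) y + mul (mul y z) x = 0) :
    LinearMap.ker (uIota K mul) ≤ lc K mul 4 := by
  have hl : ∀ x ∈ lc K mul 4, ∀ y, mul x y ∈ lc K mul 4 :=
    fun x hx y => mul_mem_lc mul (lc_antitone_succ mul 2 hx) y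
  have hr : ∀ x, ∀ y ∈ lc K mul 4, mul x y ∈ lc K mul 4 := fun x y hy => by
    rw [comm]; exact hl y hy x
  set p := lc K mul 4
  obtain ⟨q, hq⟩ : ∃ q : (L ⧸ p) →ₗ[K] (L ⧸ p) →ₗ[K] (L ⧸ p),
      ∀ x y, q (p.mkQ x) (p.mkQ y) = p.mkQ (mul x y) :=
    ⟨quotMul mul p hr hl, quotMul_mk mul p hr hl⟩
  have hsurj := p.mkQ_surjective
  have qcomm : ∀ x y, q x y = q y x := by
    intro x y
    obtain ⟨x, rfl⟩ := hsurj x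
    obtain ⟨y, rfl⟩ := hsurj y
    simp only [hq, comm x y]
  have qjacobi : ∀ x y z, q (q x y) z + q (q z x) y + q (q y z) x = 0 := by
    intro x y z
    obtain ⟨x, rfl⟩ := hsurj x
    obtain ⟨y, rfl⟩ := hsurj y
    obtain ⟨z, rfl⟩ := hsurj z
    simp only [hq, ← map_add, jacobi, map_zero]
  have qnil : ∀ x y z w, q (q (q x y) z) w = 0 := by
    intro x y z w
    obtain ⟨x, rfl⟩ := hsurj x
    obtain ⟨y, rfl⟩ := hsurj y
    obtain ⟨z, rfl⟩ := hsurj z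
    obtain ⟨w, rfl⟩ := hsurj w
    simp only [hq]
    rw [Submodule.mkQ_apply, Submodule.Quotient.mk_eq_zero]
    exact mul_mem_lc mul (mul_mem_lc mul (mul_mem_lc (m := 0) mul trivial y) z) w
  exact (ker_uIota_le_ker_hom h2 mul q qcomm qjacobi qnil p.mkQ hq).trans p.ker_mkQ.le
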